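/- M^∧(G,Y) is an inverse monoid: the multiplication ((A,g),(B,h)) ↦ ((A ∪ gB)^∧, gh) is well defined (i.e. (A ∪ gB)^∧ ∈ 𝒳_Y^∧ and gh ∈ V((A ∪ gB)^∧)) and associative; (Γ_1^∧, 1) is a two-sided identity; every s = (A,g) ∈ M^∧(G,Y) satisfies s s⁻¹ s = s and s⁻¹ s s⁻¹ = s⁻¹, where s⁻¹ := (g⁻¹A, g⁻¹) ∈ M^∧(G,Y); and any two idempotents of M^∧(G,Y) commute. -/

import Mathlib

namespace FInvPaper

/-- The extended alphabet `Y = X ⊔ Ḡ`, with `Ḡ` a bijective copy of `G`. -/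
abbrev YT (X G : Type*) := X ⊕ G

/-- The extension `ι_Y : Y → G` of the assignment map `ι : X → G`. -/
def iotaY {X G : Type*} (ι : X → G) : YT X G → G := Sum.elim ι id

/-- A (candidate) subgraph of `Cay(G,Y)`: a set of vertices together with a set
of positive edges, an edge `(a, y)` joining `a` to `a * ι_Y y`. -/
abbrev Graph (X G : Type*) := Set G × Set (G × YT X G)

variable {X G : Type*} [Group G]

/-- `Γ` is a finite subgraph of `Cay(G,Y)` containing the origin. -/
def IsSubgraph (ι : X → G) (Γ : Graph X G) : Prop :=
  Γ.1.Finite ∧ Γ.2.Finite ∧ (1 : G) ∈ Γ.1 ∧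
    ∀ e ∈ Γ.2, e.1 ∈ Γ.1 ∧ e.1 * iotaY ι e.2 ∈ Γ.1

/-- The relation on vertices given by the positive edges of `Γ`. -/
def edgeRel (ι : X → G) (Γ : Graph X G) (a b : G) : Prop :=
  ∃ y : YT X G, (a, y) ∈ Γ.2 ∧ b = a * iotaY ι y

/-- `Γ` is connected: every vertex is related to the origin `1` by the
equivalence relation generated by the edge relation. -/
def IsConn (ι : X → G) (Γ : Graph X G) : Prop :=
  ∀ v ∈ Γ.1, Relation.EqvGen (edgeRel ι Γ) 1 v

/-- `𝒳_Y`: all finite connected subgraphs of `Cay(G,Y)` containing the origin. -/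
def XY (ι : X → G) : Set (Graph X G) :=
  {Γ | IsSubgraph ι Γ ∧ IsConn ι Γ}

/-- The translate `gΓ`. -/
def gmul (g : G) (Γ : Graph X G) : Graph X G :=
  ((g * ·) '' Γ.1, (fun e => (g * e.1, e.2)) '' Γ.2)

/-- Componentwise union of graphs. -/
def gunion (Γ Δ : Graph X G) : Graph X G := (Γ.1 ∪ Δ.1, Γ.2 ∪ Δ.2)

/-- Componentwise inclusion of graphs. -/
def gsub (Γ Δ : Graph X G) : Prop := Γ.1 ⊆ Δ.1 ∧ Γ.2 ⊆ Δ.2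

/-- The closure `Γ^∧` of `Γ`: add the edge `(a, \overline{a⁻¹b})` for all
vertices `a, b` of `Γ`. -/
def clo (Γ : Graph X G) : Graph X G :=
  (Γ.1, Γ.2 ∪ {e : G × YT X G | ∃ a ∈ Γ.1, ∃ b ∈ Γ.1, e = (a, Sum.inr (a⁻¹ * b))})

/-- `Γ` is closed. -/
def IsClosedGr (Γ : Graph X G) : Prop :=
  ∀ a ∈ Γ.1, ∀ b ∈ Γ.1, (a, (Sum.inr (a⁻¹ * b) : YT X G)) ∈ Γ.2

/-- `𝒳_Y^∧`: all closed graphs in `𝒳_Y`. -/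
def XYw (ι : X → G) : Set (Graph X G) := {Γ | Γ ∈ XY ι ∧ IsClosedGr Γ}

/-- The graph `Γ_1` with single vertex `1` and no edges. -/
def gammaOne : Graph X G := ({1}, ∅)

/-- The graph `Γ_x` for `x ∈ X`. -/
def gammaX (ι : X → G) (x : X) : Graph X G :=
  ({1, ι x}, {((1 : G), (Sum.inl x : YT X G))})

/-- The graph `Γ_ḡ` for `g ∈ G`. -/
def gammaBar (g : G) : Graph X G :=
  ({1, g}, {((1 : G), (Sum.inr g : YT X G))})

/-- Raw elements: pairs `(Γ, g)`. -/
abbrev Elt (X G : Type*) := Graph X G × G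

/-- The carrier of `M(G,Y)`. -/
def Mset (ι : X → G) : Set (Elt X G) := {p | p.1 ∈ XY ι ∧ p.2 ∈ p.1.1}

/-- Multiplication of `M(G,Y)`: `(A,g)(B,h) = (A ∪ gB, gh)`. -/
def mulM (p q : Elt X G) : Elt X G := (gunion p.1 (gmul p.2 q.1), p.2 * q.2)

/-- Inversion: `(A,g)⁻¹ = (g⁻¹A, g⁻¹)`. -/
def invM (p : Elt X G) : Elt X G := (gmul p.2⁻¹ p.1, p.2⁻¹)

/-- The carrier of `M^∧(G,Y)`. -/
def Mwedge (ι : X → G) : Set (Elt X G) := {p | p.1 ∈ XYw ι ∧ p.2 ∈ p.1.1}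

/-- Multiplication of `M^∧(G,Y)`: `(A,g)(B,h) = ((A ∪ gB)^∧, gh)`. -/
def mulW (p q : Elt X G) : Elt X G := (clo (gunion p.1 (gmul p.2 q.1)), p.2 * q.2)

/-- Natural partial order of `M^∧(G,Y)`: `s ≤ t` iff `s = s s⁻¹ t`. -/
def nleW (p q : Elt X G) : Prop := p = mulW (mulW p (invM p)) q

/-- Minimum group congruence `σ` of `M^∧(G,Y)`. -/
def sigmaW (ι : X → G) (p q : Elt X G) : Prop :=
  ∃ u ∈ Mwedge ι, nleW u p ∧ nleW u q

/-- The `m`-operation of `M^∧(G,Y)`: `m(A, g) = (Γ_ḡ^∧, g)`. -/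
def mW (p : Elt X G) : Elt X G := (clo (gammaBar p.2), p.2)

/-- Natural partial order of `M(G,Y)`. -/
def nleM (p q : Elt X G) : Prop := p = mulM (mulM p (invM p)) q

/-- Minimum group congruence `σ` of `M(G,Y)`. -/
def sigmaM (ι : X → G) (p q : Elt X G) : Prop :=
  ∃ u ∈ Mset ι, nleM u p ∧ nleM u q

end FInvPaper

namespace FInvPaper

/-!
Closure is a closure operator on the lattice of graphs, and it commutes with the translations
`gmul g`, since these are order automorphisms preserving closedness. So the pairs `(A, g)` with `A`
closed multiply as in the semidirect product of a semilattice by a group; this yields all the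
identities. A closed graph through the origin is connected, because it has an edge labelled
`\overline{v}` from `1` to each vertex `v`; so connectedness of products and inverses is automatic.
-/

section Graphs

variable {X G : Type*}

theorem gunion_eq_sup (Γ Δ : Graph X G) : gunion Γ Δ = Γ ⊔ Δ := rfl

variable [Group G] {ι : X → G} {Γ Δ : Graph X G}

theorem one_gmul (Γ : Graph X G) : gmul 1 Γ = Γ := by
  simp [gmul]

theorem gmul_gmul (g h : G) (Γ : Graph X G) : gmul g (gmul h Γ) = gmul (g * h) Γ := by
  simp only [gmul, Set.image_image, mul_assoc]

theorem gmul_sup (g : G) (Γ Δ : Graph X G) : gmul g (Γ ⊔ Δ) = gmul g Γ ⊔ gmul g Δ :=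
  Prod.ext (Set.image_union ..) (Set.image_union ..)

theorem gmul_mono (g : G) : Monotone (gmul g : Graph X G → Graph X G) :=
  fun _ _ h => ⟨Set.image_mono h.1, Set.image_mono h.2⟩

theorem gmul_gammaOne_le_iff {g : G} : gmul g gammaOne ≤ Γ ↔ g ∈ Γ.1 := by
  simp [gmul, gammaOne, Prod.le_def]

theorem IsClosedGr.gmul (hΓ : IsClosedGr Γ) (g : G) : IsClosedGr (gmul g Γ) := by
  rintro _ ⟨a, ha, rfl⟩ _ ⟨b, hb, rfl⟩
  exact ⟨_, hΓ a ha b hb, by simp [mul_assoc]⟩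

theorem isClosedGr_clo (Γ : Graph X G) : IsClosedGr (clo Γ) :=
  fun a ha b hb => Or.inr ⟨a, ha, b, hb, rfl⟩

theorem le_clo (Γ : Graph X G) : Γ ≤ clo Γ :=
  ⟨le_rfl, Set.subset_union_left⟩

theorem clo_le (h : Γ ≤ Δ) (hΔ : IsClosedGr Δ) : clo Γ ≤ Δ := by
  refine ⟨h.1, Set.union_subset h.2 ?_⟩
  rintro _ ⟨a, ha, b, hb, rfl⟩
  exact hΔ a (h.1 ha) b (h.1 hb)

/-- The closure `Γ ↦ Γ^∧` as a closure operator for componentwise inclusion of graphs. -/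
def cloOperator (X G : Type*) [Group G] : ClosureOperator (Graph X G) :=
  .ofPred clo IsClosedGr le_clo isClosedGr_clo fun _ _ => clo_le

theorem IsClosedGr.clo_eq (hΓ : IsClosedGr Γ) : clo Γ = Γ :=
  ClosureOperator.IsClosed.closure_eq (c := cloOperator X G) hΓ

theorem clo_sup_clo_left (Γ Δ : Graph X G) : clo (clo Γ ⊔ Δ) = clo (Γ ⊔ Δ) :=
  (cloOperator X G).closure_sup_closure_left Γ Δ

theorem clo_sup_clo_right (Γ Δ : Graph X G) : clo (Γ ⊔ clo Δ) = clo (Γ ⊔ Δ) :=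
  (cloOperator X G).closure_sup_closure_right Γ Δ

theorem clo_gmul_le (g : G) (Γ : Graph X G) : clo (gmul g Γ) ≤ gmul g (clo Γ) :=
  clo_le (gmul_mono g (le_clo Γ)) ((isClosedGr_clo Γ).gmul g)

theorem gmul_clo (g : G) (Γ : Graph X G) : gmul g (clo Γ) = clo (gmul g Γ) := by
  refine le_antisymm ?_ (clo_gmul_le g Γ)
  calc gmul g (clo Γ) = gmul g (clo (gmul g⁻¹ (gmul g Γ))) := by
        rw [gmul_gmul, inv_mul_cancel, one_gmul]
    _ ≤ gmul g (gmul g⁻¹ (clo (gmul g Γ))) := gmul_mono g (clo_gmul_le g⁻¹ _)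
    _ = clo (gmul g Γ) := by rw [gmul_gmul, mul_inv_cancel, one_gmul]

/-- `Γ` is a finite subgraph of `Cay(G,Y)`, not necessarily through the origin. Unlike `IsSubgraph`,
this notion is invariant under all translations. -/
structure IsFiniteSubgraph (ι : X → G) (Γ : Graph X G) : Prop where
  finite_vertices : Γ.1.Finite
  finite_edges : Γ.2.Finite
  endpoints_mem : ∀ e ∈ Γ.2, e.1 ∈ Γ.1 ∧ e.1 * iotaY ι e.2 ∈ Γ.1

theorem isSubgraph_iff : IsSubgraph ι Γ ↔ IsFiniteSubgraph ι Γ ∧ 1 ∈ Γ.1 :=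
  ⟨fun ⟨hV, hE, h1, h⟩ => ⟨⟨hV, hE, h⟩, h1⟩, fun ⟨⟨hV, hE, h⟩, h1⟩ => ⟨hV, hE, h1, h⟩⟩

namespace IsFiniteSubgraph

theorem sup (hΓ : IsFiniteSubgraph ι Γ) (hΔ : IsFiniteSubgraph ι Δ) :
    IsFiniteSubgraph ι (Γ ⊔ Δ) where
  finite_vertices := hΓ.finite_vertices.union hΔ.finite_vertices
  finite_edges := hΓ.finite_edges.union hΔ.finite_edges
  endpoints_mem e he := he.elim
    (fun he => (hΓ.endpoints_mem e he).imp Or.inl Or.inl)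
    (fun he => (hΔ.endpoints_mem e he).imp Or.inr Or.inr)

theorem gmul (hΓ : IsFiniteSubgraph ι Γ) (g : G) : IsFiniteSubgraph ι (gmul g Γ) where
  finite_vertices := hΓ.finite_vertices.image _
  finite_edges := hΓ.finite_edges.image _
  endpoints_mem := by
    rintro _ ⟨e, he, rfl⟩
    obtain ⟨hsource, htarget⟩ := hΓ.endpoints_mem e he
    exact ⟨⟨_, hsource, rfl⟩, ⟨_, htarget, (mul_assoc ..).symm⟩⟩

theorem clo (hΓ : IsFiniteSubgraph ι Γ) : IsFiniteSubgraph ι (clo Γ) where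
  finite_vertices := hΓ.finite_vertices
  finite_edges := by
    refine hΓ.finite_edges.union ?_
    refine (hΓ.finite_vertices.image2 (fun a b => (a, Sum.inr (a⁻¹ * b)))
      hΓ.finite_vertices).subset ?_
    rintro _ ⟨a, ha, b, hb, rfl⟩
    exact Set.mem_image2_of_mem ha hb
  endpoints_mem := by
    rintro _ (he | ⟨a, ha, b, hb, rfl⟩)
    · exact hΓ.endpoints_mem _ he
    · exact ⟨ha, by simpa [iotaY, FInvPaper.clo] using hb⟩

end IsFiniteSubgraph

theorem IsClosedGr.isConn (hΓ : IsClosedGr Γ) (h1 : 1 ∈ Γ.1) : IsConn ι Γ :=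
  fun v hv => .rel _ _ ⟨_, hΓ 1 h1 v hv, by simp [iotaY]⟩

theorem mem_XYw_iff : Γ ∈ XYw ι ↔ IsFiniteSubgraph ι Γ ∧ 1 ∈ Γ.1 ∧ IsClosedGr Γ := by
  constructor
  · rintro ⟨⟨hsub, -⟩, hclosed⟩
    exact ⟨(isSubgraph_iff.1 hsub).1, (isSubgraph_iff.1 hsub).2, hclosed⟩
  · rintro ⟨hfin, h1, hclosed⟩
    exact ⟨⟨isSubgraph_iff.2 ⟨hfin, h1⟩, hclosed.isConn h1⟩, hclosed⟩

end Graphs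

section Multiplication

variable {X G : Type*} [Group G] {ι : X → G} {p q : Elt X G}

theorem mulW_mem_Mwedge (hp : p ∈ Mwedge ι) (hq : q ∈ Mwedge ι) : mulW p q ∈ Mwedge ι := by
  obtain ⟨hpfin, hp1, -⟩ := mem_XYw_iff.1 hp.1
  obtain ⟨hqfin, -, -⟩ := mem_XYw_iff.1 hq.1
  exact ⟨mem_XYw_iff.2 ⟨(hpfin.sup (hqfin.gmul p.2)).clo, Or.inl hp1, isClosedGr_clo _⟩,
    Or.inr ⟨q.2, hq.2, rfl⟩⟩

theorem mulW_assoc (p q r : Elt X G) : mulW (mulW p q) r = mulW p (mulW q r) := by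
  simp only [mulW, gunion_eq_sup, gmul_clo, gmul_sup, gmul_gmul, clo_sup_clo_left,
    clo_sup_clo_right, sup_assoc, mul_assoc]

theorem one_mulW (hp : IsClosedGr p.1) (h1 : 1 ∈ p.1.1) : mulW (clo gammaOne, 1) p = p := by
  have hle : gammaOne ≤ p.1 := by simpa only [one_gmul] using gmul_gammaOne_le_iff.2 h1
  simp only [mulW, gunion_eq_sup, one_gmul, clo_sup_clo_left, sup_eq_right.2 hle, hp.clo_eq,
    one_mul]

theorem mulW_one (hp : IsClosedGr p.1) (hmem : p.2 ∈ p.1.1) : mulW p (clo gammaOne, 1) = p := by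
  have hle : gmul p.2 gammaOne ≤ p.1 := gmul_gammaOne_le_iff.2 hmem
  simp only [mulW, gunion_eq_sup, gmul_clo, clo_sup_clo_right, sup_eq_left.2 hle, hp.clo_eq,
    mul_one]

theorem invM_invM (p : Elt X G) : invM (invM p) = p := by
  simp only [invM, gmul_gmul, inv_inv, mul_inv_cancel, one_gmul]

theorem invM_mem_Mwedge (hp : p ∈ Mwedge ι) : invM p ∈ Mwedge ι := by
  obtain ⟨hfin, h1, hclosed⟩ := mem_XYw_iff.1 hp.1
  exact ⟨mem_XYw_iff.2 ⟨hfin.gmul p.2⁻¹, ⟨p.2, hp.2, inv_mul_cancel p.2⟩, hclosed.gmul p.2⁻¹⟩,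
    ⟨1, h1, mul_one p.2⁻¹⟩⟩

theorem mulW_invM (hp : IsClosedGr p.1) : mulW p (invM p) = (p.1, 1) := by
  simp only [mulW, invM, gunion_eq_sup, gmul_gmul, mul_inv_cancel, one_gmul, sup_idem, hp.clo_eq]

theorem mulW_invM_mulW (hp : IsClosedGr p.1) : mulW (mulW p (invM p)) p = p := by
  rw [mulW_invM hp]
  simp only [mulW, gunion_eq_sup, one_gmul, sup_idem, hp.clo_eq, one_mul]

theorem invM_mulW_invM (hp : IsClosedGr p.1) : mulW (mulW (invM p) p) (invM p) = invM p := by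
  have hinv : IsClosedGr (invM p).1 := hp.gmul p.2⁻¹
  simpa only [invM_invM] using mulW_invM_mulW hinv

theorem snd_eq_one_of_mulW_self (hp : mulW p p = p) : p.2 = 1 :=
  mul_eq_left.1 (congrArg Prod.snd hp)

theorem mulW_comm_of_mulW_self (hp : mulW p p = p) (hq : mulW q q = q) : mulW p q = mulW q p := by
  simp only [mulW, gunion_eq_sup, snd_eq_one_of_mulW_self hp, snd_eq_one_of_mulW_self hq,
    one_gmul, sup_comm]

theorem Mwedge_inverseMonoid_general (ι : X → G) :
    (∀ p q : Elt X G, p ∈ Mwedge ι → q ∈ Mwedge ι →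
      (mulW p q).1 ∈ XYw ι ∧ (mulW p q).2 ∈ (mulW p q).1.1) ∧
    (∀ p q r : Elt X G, mulW (mulW p q) r = mulW p (mulW q r)) ∧
    (∀ p : Elt X G, p ∈ Mwedge ι →
      mulW (clo gammaOne, 1) p = p ∧ mulW p (clo gammaOne, 1) = p) ∧
    (∀ p : Elt X G, p ∈ Mwedge ι → invM p ∈ Mwedge ι ∧
      mulW (mulW p (invM p)) p = p ∧ mulW (mulW (invM p) p) (invM p) = invM p) ∧
    (∀ p q : Elt X G, mulW p p = p → mulW q q = q → mulW p q = mulW q p) := by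
  refine ⟨fun _ _ => mulW_mem_Mwedge, mulW_assoc, fun p hp => ?_, fun p hp => ?_,
    fun _ _ => mulW_comm_of_mulW_self⟩
  · obtain ⟨-, h1, hclosed⟩ := mem_XYw_iff.1 hp.1
    exact ⟨one_mulW hclosed h1, mulW_one hclosed hp.2⟩
  · have hclosed : IsClosedGr p.1 := hp.1.2
    exact ⟨invM_mem_Mwedge hp, mulW_invM_mulW hclosed, invM_mulW_invM hclosed⟩

end Multiplication

/-- `M^∧(G,Y)` is an inverse monoid: the multiplication
`((A,g),(B,h)) ↦ ((A ∪ gB)^∧, gh)` is well defined and associative,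
`(Γ_1^∧, 1)` is a two-sided identity, `(A,g)⁻¹ = (g⁻¹A, g⁻¹)` is an inverse
(`s s⁻¹ s = s` and `s⁻¹ s s⁻¹ = s⁻¹`), and idempotents commute. -/
theorem Mwedge_inverseMonoid {X G : Type*} [Nonempty X] [Group G] (ι : X → G)
    (hgen : Subgroup.closure (Set.range ι) = ⊤) :
    -- well-definedness of the multiplication
    (∀ p q : Elt X G, p ∈ Mwedge ι → q ∈ Mwedge ι →
      (mulW p q).1 ∈ XYw ι ∧ (mulW p q).2 ∈ (mulW p q).1.1) ∧
    -- associativity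
    (∀ p q r : Elt X G, p ∈ Mwedge ι → q ∈ Mwedge ι → r ∈ Mwedge ι →
      mulW (mulW p q) r = mulW p (mulW q r)) ∧
    -- `(Γ_1^∧, 1)` is a two-sided identity
    (∀ p : Elt X G, p ∈ Mwedge ι →
      mulW ((clo gammaOne, 1) : Elt X G) p = p ∧
      mulW p ((clo gammaOne, 1) : Elt X G) = p) ∧
    -- inverses
    (∀ p : Elt X G, p ∈ Mwedge ι → invM p ∈ Mwedge ι ∧
      mulW (mulW p (invM p)) p = p ∧ mulW (mulW (invM p) p) (invM p) = invM p) ∧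
    -- idempotents commute
    (∀ p q : Elt X G, p ∈ Mwedge ι → q ∈ Mwedge ι →
      mulW p p = p → mulW q q = q → mulW p q = mulW q p) := by
  obtain ⟨mul_mem, assoc, one, inv, comm⟩ := Mwedge_inverseMonoid_general ι
  exact ⟨mul_mem, fun p q r _ _ _ => assoc p q r, one, inv, fun p q _ _ => comm p q⟩

end FInvPaper
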